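/- Let A := N/d + c·L and for z > 0 define r(z) := (N + A)·log₂ z + log₂((A+1)·e^{A+1}) + N·log₂ d. For any realization of Algorithm RFD on x^n, any interval I = [a,b] ⊆ [1,n] with induced rescale partition R_I, and any probability distribution p on X, it holds that ℓ(x_a^b; RFD) − ℓ(x_a^b; p) ≤ |R_I|·r(|I|/|R_I|) + (1−c)·L·log₂(e·m) + log₂((1−c)·L), where m is the length of the first segment of R_I. -/

import Mathlib

open Finset

/-- One call to `Update`: if the total would exceed `T`, rescale first
(replace each count `s i` by `max 1 ⌊cf * s i⌋`), then add `d` to the count of `x`. -/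
noncomputable def RFDupdate {N : ℕ} (cf : ℝ) (d T : ℕ) (s : Fin N → ℕ) (x : Fin N) : Fin N → ℕ :=
  let s' : Fin N → ℕ :=
    if T < (∑ i, s i) + d then (fun i => max 1 ⌊cf * (s i : ℝ)⌋₊) else s
  fun i => if i = x then s' i + d else s' i

/-- State (counts) of Algorithm RFD after `k` update steps on the input sequence `xs`
(0-indexed: the `k`-th step processes symbol `xs (k-1)`). -/
noncomputable def RFDcounts {N : ℕ} (cf : ℝ) (d T : ℕ) (s0 : Fin N → ℕ) (xs : ℕ → Fin N) : ℕ → Fin N → ℕ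
  | 0 => s0
  | k + 1 => RFDupdate cf d T (RFDcounts cf d T s0 xs k) (xs k)

/-- Total counter `t` after `k` update steps. -/
noncomputable def RFDtotal {N : ℕ} (cf : ℝ) (d T : ℕ) (s0 : Fin N → ℕ) (xs : ℕ → Fin N) (k : ℕ) : ℕ :=
  ∑ i, RFDcounts cf d T s0 xs k i

/-- A rescale takes place in step `k ≥ 1` iff at the beginning of step `k`
the total plus `d` exceeds `T`. -/
def RFDrescaleAt {N : ℕ} (cf : ℝ) (d T : ℕ) (s0 : Fin N → ℕ) (xs : ℕ → Fin N) (k : ℕ) : Prop :=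
  1 ≤ k ∧ T < RFDtotal cf d T s0 xs (k - 1) + d

/-- `P` is a partition of the integer interval `[a,b]` into consecutive closed intervals,
listed in order; an interval `[i,j]` is represented by the pair `(i,j)`. -/
def ConsecPartition (a b : ℕ) (P : List (ℕ × ℕ)) : Prop :=
  P ≠ [] ∧ P.head?.map Prod.fst = some a ∧ P.getLast?.map Prod.snd = some b ∧
    (∀ p ∈ P, p.1 ≤ p.2) ∧ P.Chain' (fun p q => q.1 = p.2 + 1)

/-- `P` is the rescale partition of `[a,b]`: a partition into consecutive intervals `[i,j]`
such that no rescale occurs at steps `i,…,j-1`, and a rescale occurs at step `j` whenever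
`j < b` (for the last interval, a rescale at its last step is optional). -/
def RFDrescalePartition {N : ℕ} (cf : ℝ) (d T : ℕ) (s0 : Fin N → ℕ) (xs : ℕ → Fin N)
    (a b : ℕ) (P : List (ℕ × ℕ)) : Prop :=
  ConsecPartition a b P ∧
    (∀ p ∈ P, ∀ k, p.1 ≤ k → k < p.2 → ¬ RFDrescaleAt cf d T s0 xs k) ∧
    (∀ p ∈ P, p.2 < b → RFDrescaleAt cf d T s0 xs p.2)

/-- The probability `RFD(x; x^k)` that Algorithm RFD assigns to symbol `x` after `k` steps. -/
noncomputable def RFDprob {N : ℕ} (cf : ℝ) (d T : ℕ) (s0 : Fin N → ℕ) (xs : ℕ → Fin N)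
    (k : ℕ) (x : Fin N) : ℝ :=
  (RFDcounts cf d T s0 xs k x : ℝ) / (RFDtotal cf d T s0 xs k : ℝ)

/-- Ideal code length (in bits) of Algorithm RFD on steps `a,…,b` (1-indexed steps;
step `k` encodes symbol `xs (k-1)` using the prediction after `k-1` steps). -/
noncomputable def RFDcodeLen {N : ℕ} (cf : ℝ) (d T : ℕ) (s0 : Fin N → ℕ) (xs : ℕ → Fin N)
    (a b : ℕ) : ℝ :=
  -∑ k ∈ Finset.Icc a b, Real.logb 2 (RFDprob cf d T s0 xs (k - 1) (xs (k - 1)))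

/-- Ideal code length (in bits) of a fixed distribution `p` on steps `a,…,b`. -/
noncomputable def distCodeLen {N : ℕ} (p : Fin N → ℝ) (xs : ℕ → Fin N) (a b : ℕ) : ℝ :=
  -∑ k ∈ Finset.Icc a b, Real.logb 2 (p (xs (k - 1)))

/-- The redundancy function `r(z) = (N + A)·log₂ z + log₂((A+1)·e^(A+1)) + N·log₂ d`. -/
noncomputable def rBound (N d : ℕ) (A z : ℝ) : ℝ :=
  ((N : ℝ) + A) * Real.logb 2 z + Real.logb 2 ((A + 1) * Real.exp (A + 1))
    + (N : ℝ) * Real.logb 2 d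

/-- Number of occurrences of `x` among `y 0, …, y (k - 1)`. -/
def occCount {N : ℕ} (y : ℕ → Fin N) (k : ℕ) (x : Fin N) : ℕ :=
  ∑ j ∈ Finset.range k, if x = y j then 1 else 0

lemma occCount_succ {N : ℕ} (y : ℕ → Fin N) (k : ℕ) (x : Fin N) :
    occCount y (k + 1) x = occCount y k x + if x = y k then 1 else 0 :=
  Finset.sum_range_succ _ _

lemma sum_occCount {N : ℕ} (y : ℕ → Fin N) (k : ℕ) : ∑ x, occCount y k x = k := by
  unfold occCount
  rw [Finset.sum_comm]
  simp

/-- A sum along a sequence, grouped by letters. -/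
lemma sum_range_occCount {N : ℕ} (y : ℕ → Fin N) (h : Fin N → ℕ → ℝ) (m : ℕ) :
    ∑ k ∈ Finset.range m, h (y k) (occCount y k (y k)) =
      ∑ x, ∑ j ∈ Finset.range (occCount y m x), h x j := by
  induction m with
  | zero => simp [occCount]
  | succ m ih =>
    rw [Finset.sum_range_succ, ih]
    have key : ∀ x, ∑ j ∈ Finset.range (occCount y (m + 1) x), h x j =
        ∑ j ∈ Finset.range (occCount y m x), h x j +
          if x = y m then h x (occCount y m x) else 0 := by
      intro x
      rw [occCount_succ]
      split_ifs with hx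
      · rw [Finset.sum_range_succ]
      · simp
    simp [key, Finset.sum_add_distrib]

lemma prod_factorial_mul_prod_pow_le {N : ℕ} (p : Fin N → ℝ) (hp0 : ∀ x, 0 ≤ p x)
    (hp1 : ∑ x, p x = 1) (c : Fin N → ℕ) :
    ((∑ x, c x).factorial : ℝ) * ∏ x, p x ^ c x ≤ ∏ x, ((c x).factorial : ℝ) := by
  have hterm : (Nat.multinomial Finset.univ c : ℝ) * ∏ x, p x ^ c x ≤ 1 := by
    have h := Finset.sum_pow_eq_sum_piAntidiag Finset.univ p (∑ x, c x)
    rw [hp1, one_pow] at h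
    rw [h]
    refine Finset.single_le_sum
      (f := fun k : Fin N → ℕ => (Nat.multinomial Finset.univ k : ℝ) * ∏ x, p x ^ k x)
      (fun k _ => mul_nonneg (Nat.cast_nonneg _)
        (Finset.prod_nonneg fun x _ => pow_nonneg (hp0 x) _)) ?_
    simp
  have hspec : (∏ x, ((c x).factorial : ℝ)) * Nat.multinomial Finset.univ c =
      ((∑ x, c x).factorial : ℝ) := by
    exact_mod_cast Nat.multinomial_spec Finset.univ c
  rw [← hspec, mul_assoc]
  exact mul_le_of_le_one_right (by positivity) hterm

/-- The log-likelihood of a word is at most minus the log of the multinomial coefficient. -/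
lemma sum_log_prob_le {N : ℕ} (p : Fin N → ℝ) (hp0 : ∀ x, 0 ≤ p x)
    (hp1 : ∑ x, p x = 1) (c : Fin N → ℕ) (hpos : ∀ x, c x ≠ 0 → p x ≠ 0) :
    ∑ x, (c x : ℝ) * Real.log (p x) ≤
      ∑ x, Real.log ((c x).factorial : ℝ) - Real.log ((∑ x, c x).factorial : ℝ) := by
  have hpow : ∀ x, p x ^ c x ≠ 0 := fun x => by
    by_cases h : c x = 0
    · simp [h]
    · exact pow_ne_zero _ (hpos x h)
  have hpp : 0 < ∏ x, p x ^ c x :=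
    Finset.prod_pos fun x _ => lt_of_le_of_ne (pow_nonneg (hp0 x) _) (hpow x).symm
  have hf : (0 : ℝ) < ((∑ x, c x).factorial : ℝ) := by positivity
  have h := Real.log_le_log (mul_pos hf hpp) (prod_factorial_mul_prod_pow_le p hp0 hp1 c)
  rw [Real.log_mul hf.ne' hpp.ne', Real.log_prod (fun x _ => hpow x),
    Real.log_prod (fun x _ => by positivity)] at h
  simp only [Real.log_pow] at h
  linarith

lemma log_factorial_sub_le {d m n : ℕ} (hd : 1 ≤ d) (hm : 1 ≤ m) (hn : n ≤ m) (σ : ℝ)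
    (hσ : 1 ≤ σ) :
    Real.log (n.factorial : ℝ) - Real.log (d * m : ℝ) ≤
      ∑ j ∈ Finset.range n, Real.log ((σ + d * j) / d) := by
  have hd' : (1 : ℝ) ≤ d := by exact_mod_cast hd
  have hm' : (1 : ℝ) ≤ m := by exact_mod_cast hm
  have hlog : 0 ≤ Real.log (d * m : ℝ) := Real.log_nonneg (by nlinarith)
  rcases n with _ | n
  · simpa using hlog
  · rw [Finset.sum_range_succ']
    have htail : Real.log (n.factorial : ℝ) ≤
        ∑ j ∈ Finset.range n, Real.log ((σ + d * ((j + 1 : ℕ) : ℝ)) / d) := by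
      rw [← Finset.prod_range_add_one_eq_factorial, Nat.cast_prod,
        Real.log_prod (fun x _ => by positivity)]
      refine Finset.sum_le_sum fun j _ => Real.log_le_log (by positivity) ?_
      rw [le_div_iff₀ (by linarith)]
      linarith [mul_comm (d : ℝ) ((j + 1 : ℕ) : ℝ)]
    have hhead : -Real.log d ≤ Real.log ((σ + d * ((0 : ℕ) : ℝ)) / d) := by
      rw [← Real.log_inv]
      refine Real.log_le_log (by positivity) ?_
      rw [Nat.cast_zero, mul_zero, add_zero, inv_eq_one_div]
      gcongr
    have hnm : Real.log ((n + 1 : ℕ) : ℝ) ≤ Real.log m :=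
      Real.log_le_log (by positivity) (by exact_mod_cast hn)
    rw [Nat.factorial_succ, Nat.cast_mul, Real.log_mul (by positivity) (by positivity),
      Real.log_mul (by positivity) (by positivity)]
    linarith

lemma sum_log_add_le (B : ℝ) (hB : 1 ≤ B) (m : ℕ) :
    ∑ j ∈ Finset.range m, Real.log (B + j) ≤
      Real.log (m.factorial : ℝ) + (B - 1) * (1 + Real.log m) := by
  have hH : ∑ j ∈ Finset.range m, ((j : ℝ) + 1)⁻¹ ≤ 1 + Real.log m := by
    have := harmonic_le_one_add_log m
    simpa [harmonic] using this
  have hterm : ∀ j ∈ Finset.range m,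
      Real.log (B + j) ≤ Real.log ((j + 1 : ℕ) : ℝ) + (B - 1) * ((j : ℝ) + 1)⁻¹ := by
    intro j _
    have hj : (0 : ℝ) < (j : ℝ) + 1 := by positivity
    have hBj : 0 < B + j := by positivity
    have h := Real.log_le_sub_one_of_pos (div_pos hBj hj)
    rw [Real.log_div hBj.ne' hj.ne'] at h
    have heq : (B + j) / (j + 1) - 1 = (B - 1) * ((j : ℝ) + 1)⁻¹ := by
      field_simp
      ring
    push_cast
    linarith
  have hfac : Real.log (m.factorial : ℝ) = ∑ j ∈ Finset.range m, Real.log ((j + 1 : ℕ) : ℝ) := by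
    rw [← Finset.prod_range_add_one_eq_factorial, Nat.cast_prod,
      Real.log_prod (fun x _ => by positivity)]
  calc _ ≤ _ := Finset.sum_le_sum hterm
    _ = Real.log (m.factorial : ℝ) +
        (B - 1) * ∑ j ∈ Finset.range m, ((j : ℝ) + 1)⁻¹ := by
      rw [Finset.sum_add_distrib, hfac, Finset.mul_sum]
    _ ≤ _ := by gcongr

/-- Redundancy of frequency counting without rescaling, in nats: initial counts `s`,
increment `d`, initial total at most `d * B`. -/
lemma freq_redundancy_le {N d m : ℕ} (hd : 1 ≤ d) (hm : 1 ≤ m) (y : ℕ → Fin N)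
    (s : Fin N → ℕ) (hs : ∀ x, 1 ≤ s x) (B : ℝ) (hB : 1 ≤ B)
    (hsB : ((∑ x, s x : ℕ) : ℝ) ≤ d * B)
    (p : Fin N → ℝ) (hp0 : ∀ x, 0 ≤ p x) (hp1 : ∑ x, p x = 1)
    (hpos : ∀ k < m, p (y k) ≠ 0) :
    ∑ k ∈ Finset.range m, (Real.log (p (y k)) -
      Real.log (((s (y k) + d * occCount y k (y k) : ℕ) : ℝ) /
        ((∑ x, s x + d * k : ℕ) : ℝ))) ≤
      N * Real.log (d * m : ℝ) + (B - 1) * (1 + Real.log m) := by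
  have hd0 : (0 : ℝ) < d := by exact_mod_cast hd
  have hcard : 1 ≤ ∑ x, s x :=
    (hs (y 0)).trans (Finset.single_le_sum (fun _ _ => Nat.zero_le _) (Finset.mem_univ _))
  have hle : ∀ x, occCount y m x ≤ m := fun x =>
    (Finset.single_le_sum (f := occCount y m) (fun _ _ => Nat.zero_le _)
      (Finset.mem_univ x)).trans (sum_occCount y m).le
  have hocc : ∀ x, occCount y m x ≠ 0 → p x ≠ 0 := by
    intro x hx
    obtain ⟨k, hk, hk'⟩ := Finset.exists_ne_zero_of_sum_ne_zero hx
    have hxy : x = y k := by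
      by_contra h
      simp [h] at hk'
    exact hxy ▸ hpos k (Finset.mem_range.1 hk)
  have hP : ∑ k ∈ Finset.range m, Real.log (p (y k)) ≤
      ∑ x, Real.log ((occCount y m x).factorial : ℝ) - Real.log (m.factorial : ℝ) := by
    have h := sum_log_prob_le p hp0 hp1 (occCount y m) hocc
    rw [sum_occCount] at h
    refine le_trans (le_of_eq ?_) h
    rw [sum_range_occCount y (fun x _ => Real.log (p x)) m]
    simp
  have hS : ∑ x, Real.log ((occCount y m x).factorial : ℝ) - N * Real.log (d * m : ℝ) ≤
      ∑ k ∈ Finset.range m, Real.log (((s (y k) : ℝ) + d * (occCount y k (y k) : ℝ)) / d) := by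
    rw [sum_range_occCount y (fun x j => Real.log (((s x : ℝ) + d * (j : ℝ)) / d)) m]
    have h := Finset.sum_le_sum fun x (_ : x ∈ Finset.univ) =>
      log_factorial_sub_le hd hm (hle x) (s x : ℝ) (by exact_mod_cast hs x)
    rw [Finset.sum_sub_distrib] at h
    simpa using h
  have hT := sum_log_add_le B hB m
  have hterm : ∀ k ∈ Finset.range m, Real.log (p (y k)) -
      Real.log (((s (y k) + d * occCount y k (y k) : ℕ) : ℝ) /
        ((∑ x, s x + d * k : ℕ) : ℝ)) ≤
      Real.log (p (y k)) - Real.log (((s (y k) : ℝ) + d * (occCount y k (y k) : ℝ)) / d)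
        + Real.log (B + k) := by
    intro k _
    have hsk : (0 : ℝ) < s (y k) := by exact_mod_cast hs (y k)
    have htk : (0 : ℝ) < ((∑ x, s x + d * k : ℕ) : ℝ) := by
      exact_mod_cast Nat.lt_of_lt_of_le hcard (Nat.le_add_right _ _)
    have hlog : Real.log ((∑ x, s x + d * k : ℕ) : ℝ) ≤ Real.log d + Real.log (B + k) := by
      rw [← Real.log_mul hd0.ne' (by positivity)]
      refine Real.log_le_log htk ?_
      rw [Nat.cast_add, Nat.cast_mul]
      linarith
    have hnum : (0 : ℝ) < (s (y k) : ℝ) + d * (occCount y k (y k) : ℝ) := by positivity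
    rw [Real.log_div (by push_cast; exact hnum.ne') htk.ne', Real.log_div hnum.ne' hd0.ne']
    push_cast at hlog ⊢
    linarith
  refine (Finset.sum_le_sum hterm).trans ?_
  rw [Finset.sum_add_distrib, Finset.sum_sub_distrib]
  linarith

lemma ConsecPartition.le {a b : ℕ} {P : List (ℕ × ℕ)} (h : ConsecPartition a b P) : a ≤ b := by
  induction P generalizing a with
  | nil => exact absurd rfl h.1
  | cons x l ih =>
    obtain ⟨-, hhead, hlast, hle, hchain⟩ := h
    have hxa : x.1 = a := by simpa using hhead
    have hx := hle x (by simp)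
    rcases l with _ | ⟨y, l⟩
    · have hxb : x.2 = b := by simpa using hlast
      omega
    · have hy : y.1 = x.2 + 1 := (List.isChain_cons_cons.1 hchain).1
      have := ih (a := x.2 + 1) ⟨by simp, by simp [hy], by simpa using hlast,
        fun p hp => hle p (by simp [hp]), (List.isChain_cons_cons.1 hchain).2⟩
      omega

lemma ConsecPartition.bounds {a b : ℕ} {P : List (ℕ × ℕ)} (h : ConsecPartition a b P) :
    ∀ q ∈ P, a ≤ q.1 ∧ q.2 ≤ b := by
  induction P generalizing a with
  | nil => exact absurd rfl h.1
  | cons x l ih =>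
    obtain ⟨-, hhead, hlast, hle, hchain⟩ := h
    have hxa : x.1 = a := by simpa using hhead
    have hx := hle x (by simp)
    rcases l with _ | ⟨y, l⟩
    · have hxb : x.2 = b := by simpa using hlast
      intro q hq
      obtain rfl : q = x := by simpa using hq
      omega
    · have hy : y.1 = x.2 + 1 := (List.isChain_cons_cons.1 hchain).1
      have htail : ConsecPartition (x.2 + 1) b (y :: l) :=
        ⟨by simp, by simp [hy], by simpa using hlast,
          fun p hp => hle p (by simp [hp]), (List.isChain_cons_cons.1 hchain).2⟩
      have hb := htail.le
      intro q hq
      rcases List.mem_cons.1 hq with rfl | hq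
      · omega
      · have := ih htail q hq
        omega

/-- Summing affine bounds over the segments of a consecutive partition, with an extra
allowance `E` for the first segment; every other segment starts right after a step in `R`. -/
lemma ConsecPartition.sum_le {b : ℕ} (f : ℕ → ℝ) (R : ℕ → Prop) (C D : ℝ)
    (P : List (ℕ × ℕ)) (a : ℕ) (E : ℝ) (h : ConsecPartition a b P)
    (hR : ∀ p ∈ P, p.2 < b → R p.2)
    (hseg : ∀ p ∈ P, 1 ≤ p.1 → R (p.1 - 1) →
      ∑ k ∈ Finset.Icc p.1 p.2, f k ≤ C + D * ((p.2 : ℝ) + 1 - p.1))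
    (hfirst : ∀ q, P.head? = some q →
      ∑ k ∈ Finset.Icc q.1 q.2, f k ≤ E + (C + D * ((q.2 : ℝ) + 1 - q.1))) :
    ∑ k ∈ Finset.Icc a b, f k ≤ E + (P.length * C + D * ((b : ℝ) + 1 - a)) := by
  induction P generalizing a E with
  | nil => exact absurd rfl h.1
  | cons x l ih =>
    obtain ⟨-, hhead, hlast, hle, hchain⟩ := h
    have hxa : x.1 = a := by simpa using hhead
    have hx := hle x (by simp)
    have hf := hfirst x rfl
    rcases l with _ | ⟨y, l⟩
    · have hxb : x.2 = b := by simpa using hlast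
      subst hxa hxb
      simpa using hf
    · have hy : y.1 = x.2 + 1 := (List.isChain_cons_cons.1 hchain).1
      have htail : ConsecPartition (x.2 + 1) b (y :: l) :=
        ⟨by simp, by simp [hy], by simpa using hlast,
          fun p hp => hle p (by simp [hp]), (List.isChain_cons_cons.1 hchain).2⟩
      have hb := htail.le
      have hRx : R (y.1 - 1) := by
        rw [hy]
        exact hR x (by simp) (by omega)
      have hrec := ih (x.2 + 1) 0 htail (fun p hp => hR p (by simp [hp]))
        (fun p hp => hseg p (by simp [hp]))
        (fun q hq => by
          obtain rfl : y = q := by simpa using hq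
          have := hseg y (by simp) (by omega) hRx
          linarith)
      have hsplit : ∑ k ∈ Finset.Icc a b, f k =
          ∑ k ∈ Finset.Icc x.1 x.2, f k + ∑ k ∈ Finset.Icc (x.2 + 1) b, f k := by
        rw [← Finset.Ico_add_one_right_eq_Icc, ← Finset.Ico_add_one_right_eq_Icc,
          ← Finset.Ico_add_one_right_eq_Icc, hxa]
        exact (Finset.sum_Ico_consecutive f (by omega) (by omega)).symm
      rw [hsplit]
      subst hxa
      simp only [List.length_cons] at hrec ⊢
      push_cast at hrec ⊢
      linarith

section Algorithm

variable {N d T : ℕ} {cf : ℝ} {s0 : Fin N → ℕ} {xs : ℕ → Fin N}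

lemma sum_rescaled_le (hc0 : 0 ≤ cf) (hc1 : cf < 1) (s : Fin N → ℕ) (hs : ∀ x, 1 ≤ s x)
    (hT : ∑ x, s x ≤ T) :
    ((∑ x, max 1 ⌊cf * (s x : ℝ)⌋₊ : ℕ) : ℝ) ≤ N + cf * ((T : ℝ) - N) := by
  have hterm : ∀ x ∈ (Finset.univ : Finset (Fin N)),
      ((max 1 ⌊cf * (s x : ℝ)⌋₊ : ℕ) : ℝ) ≤ 1 + cf * ((s x : ℝ) - 1) := by
    intro x _
    have hsx : (1 : ℝ) ≤ s x := by exact_mod_cast hs x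
    rw [Nat.cast_max]
    refine max_le ?_ ?_
    · push_cast
      nlinarith
    · have := Nat.floor_le (a := cf * (s x : ℝ)) (by positivity)
      linarith
  have hT' : (∑ x, (s x : ℝ)) ≤ T := by exact_mod_cast hT
  rw [Nat.cast_sum]
  refine (Finset.sum_le_sum hterm).trans ?_
  rw [Finset.sum_add_distrib, ← Finset.mul_sum, Finset.sum_sub_distrib]
  simp only [Finset.sum_const, Finset.card_univ, Fintype.card_fin, nsmul_eq_mul, mul_one]
  gcongr

lemma RFDtotal_succ_of_not_rescale (k : ℕ)
    (h : ¬ T < RFDtotal cf d T s0 xs k + d) :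
    RFDtotal cf d T s0 xs (k + 1) = RFDtotal cf d T s0 xs k + d := by
  unfold RFDtotal at h ⊢
  have key : ∀ x, RFDcounts cf d T s0 xs (k + 1) x =
      RFDcounts cf d T s0 xs k x + if x = xs k then d else 0 := by
    intro x
    simp only [RFDcounts, RFDupdate, if_neg h]
    split_ifs <;> simp
  simp [key, Finset.sum_add_distrib]

lemma RFDtotal_succ_of_rescale (k : ℕ)
    (h : T < RFDtotal cf d T s0 xs k + d) :
    RFDtotal cf d T s0 xs (k + 1) =
      ∑ x, max 1 ⌊cf * (RFDcounts cf d T s0 xs k x : ℝ)⌋₊ + d := by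
  unfold RFDtotal at h ⊢
  have key : ∀ x, RFDcounts cf d T s0 xs (k + 1) x =
      max 1 ⌊cf * (RFDcounts cf d T s0 xs k x : ℝ)⌋₊ + if x = xs k then d else 0 := by
    intro x
    simp only [RFDcounts, RFDupdate, if_pos h]
    split_ifs <;> simp
  simp [key, Finset.sum_add_distrib]

lemma one_le_RFDcounts (hs0 : ∀ x, 1 ≤ s0 x) (k : ℕ) (x : Fin N) :
    1 ≤ RFDcounts cf d T s0 xs k x := by
  induction k generalizing x with
  | zero => exact hs0 x
  | succ k ih =>
    have := ih x
    simp only [RFDcounts, RFDupdate]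
    split_ifs <;> first | omega | simp [Nat.le_add_right_of_le]

lemma RFDtotal_le (hc0 : 0 ≤ cf) (hc1 : cf < 1) (hT : (d : ℝ) ≤ (1 - cf) * ((T : ℝ) - N))
    (hs0 : ∀ x, 1 ≤ s0 x) (hsum : ∑ x, s0 x ≤ T) (k : ℕ) :
    RFDtotal cf d T s0 xs k ≤ T := by
  induction k with
  | zero => exact hsum
  | succ k ih =>
    by_cases h : T < RFDtotal cf d T s0 xs k + d
    · have h1 := sum_rescaled_le hc0 hc1 _ (one_le_RFDcounts hs0 k) ih
      have h2 : (RFDtotal cf d T s0 xs (k + 1) : ℝ) ≤ T := by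
        rw [RFDtotal_succ_of_rescale k h, Nat.cast_add]
        linarith
      exact_mod_cast h2
    · rw [RFDtotal_succ_of_not_rescale k h]
      omega

/-- Right after a rescale the total is small. -/
lemma RFDtotal_le_of_rescaleAt (hc0 : 0 ≤ cf) (hc1 : cf < 1)
    (hT : (d : ℝ) ≤ (1 - cf) * ((T : ℝ) - N))
    (hs0 : ∀ x, 1 ≤ s0 x) (hsum : ∑ x, s0 x ≤ T) (k : ℕ)
    (h : RFDrescaleAt cf d T s0 xs k) :
    (RFDtotal cf d T s0 xs k : ℝ) ≤ N + cf * ((T : ℝ) - N) + d := by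
  obtain ⟨hk, h⟩ := h
  obtain ⟨k, rfl⟩ := Nat.exists_eq_add_of_le' hk
  rw [Nat.add_sub_cancel] at h
  rw [RFDtotal_succ_of_rescale k h, Nat.cast_add]
  have := sum_rescaled_le hc0 hc1 _ (one_le_RFDcounts (cf := cf) (xs := xs) hs0 k)
    (RFDtotal_le hc0 hc1 hT hs0 hsum k)
  linarith

/-- Counts along a stretch without rescale. -/
lemma RFDcounts_add_of_not_rescaleAt (u k : ℕ)
    (h : ∀ j, u + 1 ≤ j → j ≤ u + k → ¬ RFDrescaleAt cf d T s0 xs j) (x : Fin N) :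
    RFDcounts cf d T s0 xs (u + k) x =
      RFDcounts cf d T s0 xs u x + d * occCount (fun j => xs (u + j)) k x := by
  induction k generalizing x with
  | zero => simp [occCount]
  | succ k ih =>
    have hk := ih fun j h1 h2 => h j h1 (by omega)
    have hn : ¬ T < (∑ i, RFDcounts cf d T s0 xs (u + k) i) + d := fun hlt =>
      h (u + k + 1) (by omega) (by omega) ⟨by omega, by simpa [RFDtotal] using hlt⟩
    rw [← Nat.add_assoc]
    simp only [RFDcounts, RFDupdate, if_neg hn, occCount_succ]
    rw [hk x]
    split_ifs <;> ring

/-- Redundancy, in nats, of one segment of the rescale partition. -/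
lemma RFD_segment_redundancy_le (hd : 1 ≤ d) (hs0 : ∀ x, 1 ≤ s0 x)
    (p : Fin N → ℝ) (hp0 : ∀ x, 0 ≤ p x) (hp1 : ∑ x, p x = 1)
    (i j : ℕ) (hi : 1 ≤ i) (hij : i ≤ j)
    (hno : ∀ k, i ≤ k → k < j → ¬ RFDrescaleAt cf d T s0 xs k)
    (hpos : ∀ k ∈ Finset.Icc i j, p (xs (k - 1)) ≠ 0)
    (B : ℝ) (hB : 1 ≤ B) (htot : (RFDtotal cf d T s0 xs (i - 1) : ℝ) ≤ d * B) :
    ∑ k ∈ Finset.Icc i j, (Real.log (p (xs (k - 1))) -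
      Real.log (RFDprob cf d T s0 xs (k - 1) (xs (k - 1)))) ≤
      N * Real.log (d * ((j : ℝ) + 1 - i)) + (B - 1) * (1 + Real.log ((j : ℝ) + 1 - i)) := by
  obtain ⟨u, rfl⟩ := Nat.exists_eq_add_of_le' hi
  obtain ⟨l, rfl⟩ := Nat.exists_eq_add_of_le hij
  have hlen : (((u + 1 + l : ℕ) : ℝ) + 1 - ((u + 1 : ℕ) : ℝ)) = ((l + 1 : ℕ) : ℝ) := by
    push_cast
    ring
  rw [hlen, ← Finset.Ico_add_one_right_eq_Icc, Finset.sum_Ico_eq_sum_range,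
    show u + 1 + l + 1 - (u + 1) = l + 1 by omega]
  have hidx : ∀ k, u + 1 + k - 1 = u + k := fun k => by omega
  simp only [hidx]
  have hmain := freq_redundancy_le hd (Nat.le_add_left 1 l) (fun k => xs (u + k))
    (RFDcounts cf d T s0 xs u) (one_le_RFDcounts hs0 u) B hB (by simpa [RFDtotal] using htot)
    p hp0 hp1 (fun k hk => by
      have := hpos (u + 1 + k) (Finset.mem_Icc.2 ⟨by omega, by omega⟩)
      rwa [hidx] at this)
  refine le_trans (le_of_eq (Finset.sum_congr rfl fun k hk => ?_)) hmain
  have hcnt := RFDcounts_add_of_not_rescaleAt (cf := cf) (d := d) (T := T) (s0 := s0) (xs := xs)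
    u k fun t h1 h2 => hno t h1 (by have := Finset.mem_range.1 hk; omega)
  unfold RFDprob RFDtotal
  simp only [hcnt, Finset.sum_add_distrib, ← Finset.mul_sum, sum_occCount]

end Algorithm

/-- Lemma 7: with `A = N/d + c·L`, `L = (T-N)/d` and `r` as above, for
any realization of Algorithm RFD, any interval `I = [a,b] ⊆ [1,n]` with induced rescale
partition `R_I` (first segment length `m`), and any probability distribution `p` on `X`:
`ℓ(x_a^b; RFD) - ℓ(x_a^b; p) ≤ |R_I|·r(|I|/|R_I|) + (1-c)·L·log₂(e·m) + log₂((1-c)·L)`.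
If `p` assigns probability `0` to an occurring letter the claim is trivial
(first disjunct, code length `+∞`). -/
theorem stmt12 (N d T : ℕ) (cf : ℝ) (hN : 1 < N)
    (s0 : Fin N → ℕ) (xs : ℕ → Fin N)
    (hd : 1 ≤ d) (hc0 : 0 ≤ cf) (hc1 : cf < 1)
    (hT : (d : ℝ) ≤ (1 - cf) * ((T : ℝ) - N))
    (hs0 : ∀ x, 1 ≤ s0 x) (hsum : ∑ x, s0 x ≤ T)
    (n a b : ℕ) (ha : 1 ≤ a) (hab : a ≤ b) (hbn : b ≤ n)
    (RI : List (ℕ × ℕ)) (hRI : RFDrescalePartition cf d T s0 xs a b RI)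
    (q : ℕ × ℕ) (hq : RI.head? = some q)
    (L : ℝ) (hL : L = ((T : ℝ) - N) / d)
    (A : ℝ) (hA : A = (N : ℝ) / d + cf * L)
    (p : Fin N → ℝ) (hp0 : ∀ x, 0 ≤ p x) (hp1 : ∑ x, p x = 1) :
    (∃ k ∈ Finset.Icc a b, p (xs (k - 1)) = 0) ∨
      RFDcodeLen cf d T s0 xs a b - distCodeLen p xs a b ≤
        (RI.length : ℝ) * rBound N d A (((b - a + 1 : ℕ) : ℝ) / (RI.length : ℝ))
        + (1 - cf) * L * Real.logb 2 (Real.exp 1 * ((q.2 - q.1 + 1 : ℕ) : ℝ))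
        + Real.logb 2 ((1 - cf) * L) := by
  by_cases hzero : ∃ k ∈ Finset.Icc a b, p (xs (k - 1)) = 0
  · exact Or.inl hzero
  right
  push Not at hzero
  obtain ⟨hcons, hno, hresc⟩ := hRI
  have hd0 : (0 : ℝ) < d := by exact_mod_cast hd
  have hdL : d * L = (T : ℝ) - N := by
    rw [hL]
    field_simp
  have hcL : 1 ≤ (1 - cf) * L := by
    rw [hL, ← mul_div_assoc, one_le_div hd0]
    exact hT
  have hLpos : 0 < L := by
    by_contra hneg
    nlinarith
  have hA0 : 0 ≤ A := by
    rw [hA]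
    positivity
  have hdA : d * A = N + cf * ((T : ℝ) - N) := by
    rw [hA, ← hdL]
    field_simp
  have hlog2 : 0 < Real.log 2 := Real.log_pos one_lt_two
  have hlen : (0 : ℝ) < RI.length := by
    exact_mod_cast List.length_pos_iff.2 hcons.1
  set M : ℝ := ((b - a + 1 : ℕ) : ℝ) / (RI.length : ℝ) with hM
  have hIlen : ((b - a + 1 : ℕ) : ℝ) = (b : ℝ) + 1 - a := by
    push_cast [Nat.cast_sub hab]
    ring
  have hM0 : 0 < M := by positivity
  -- every segment stays inside `[a, b]`
  have hmem : ∀ q ∈ RI, a ≤ q.1 ∧ q.1 ≤ q.2 ∧ q.2 ≤ b := fun q hq =>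
    ⟨(hcons.bounds q hq).1, hcons.2.2.2.1 q hq, (hcons.bounds q hq).2⟩
  have htangent : ∀ z : ℝ, 0 < z → Real.log z ≤ Real.log M + (z / M - 1) := by
    intro z hz
    have h := Real.log_le_sub_one_of_pos (div_pos hz hM0)
    rw [Real.log_div hz.ne' hM0.ne'] at h
    linarith
  have hseg : ∀ q ∈ RI, ∀ B : ℝ, 1 ≤ B → (RFDtotal cf d T s0 xs (q.1 - 1) : ℝ) ≤ d * B →
      ∑ k ∈ Finset.Icc q.1 q.2, (Real.log (p (xs (k - 1))) -
        Real.log (RFDprob cf d T s0 xs (k - 1) (xs (k - 1)))) ≤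
      (B - 1 - A) * (1 + Real.log ((q.2 : ℝ) + 1 - q.1)) +
        ((N * Real.log d + A + (N + A) * (Real.log M - 1)) +
          (N + A) / M * ((q.2 : ℝ) + 1 - q.1)) := by
    intro q hq B hB hBt
    obtain ⟨h1, h2, h3⟩ := hmem q hq
    have hz : 0 < (q.2 : ℝ) + 1 - q.1 := by
      have : (q.1 : ℝ) ≤ q.2 := by exact_mod_cast h2
      linarith
    have h := RFD_segment_redundancy_le hd hs0 p hp0 hp1 q.1 q.2 (by omega) h2
      (hno q hq) (fun k hk => hzero k (by
        rw [Finset.mem_Icc] at hk ⊢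
        omega)) B hB hBt
    rw [Real.log_mul hd0.ne' hz.ne'] at h
    have ht := mul_le_mul_of_nonneg_left (htangent _ hz) (by positivity : (0 : ℝ) ≤ N + A)
    have he : (N + A) / M * ((q.2 : ℝ) + 1 - q.1) = (N + A) * (((q.2 : ℝ) + 1 - q.1) / M) := by
      ring
    rw [he]
    linarith
  have hqmem : q ∈ RI := List.mem_of_mem_head? hq
  have hqle := (hmem q hqmem).2.1
  have hmlen : ((q.2 - q.1 + 1 : ℕ) : ℝ) = (q.2 : ℝ) + 1 - q.1 := by
    push_cast [Nat.cast_sub hqle]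
    ring
  have hm1 : (1 : ℝ) ≤ (q.2 : ℝ) + 1 - q.1 := by
    have : (q.1 : ℝ) ≤ q.2 := by exact_mod_cast hqle
    linarith
  have hmlog : 0 ≤ Real.log ((q.2 : ℝ) + 1 - q.1) := Real.log_nonneg hm1
  have htotal := ConsecPartition.sum_le _ (RFDrescaleAt cf d T s0 xs)
    (N * Real.log d + A + (N + A) * (Real.log M - 1)) ((N + A) / M) RI a
    (((1 - cf) * L - 1) * (1 + Real.log ((q.2 : ℝ) + 1 - q.1))) hcons hresc
    (fun q' hq' _ hR => by
      have h := hseg q' hq' (A + 1) (by linarith) (by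
        have := RFDtotal_le_of_rescaleAt hc0 hc1 hT hs0 hsum _ hR
        linarith)
      rw [show A + 1 - 1 - A = 0 by ring, zero_mul, zero_add] at h
      exact h)
    (fun q' hq' => by
      obtain rfl : q = q' := Option.some.inj (hq.symm.trans hq')
      have h := hseg q hqmem (A + (1 - cf) * L) (by linarith) (by
        have h : (RFDtotal cf d T s0 xs (q.1 - 1) : ℝ) ≤ T := by
          exact_mod_cast RFDtotal_le hc0 hc1 hT hs0 hsum _
        have hdB : d * (A + (1 - cf) * L) = T := by
          linear_combination hdA + (1 - cf) * hdL
        linarith)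
      rw [show A + (1 - cf) * L - 1 - A = (1 - cf) * L - 1 by ring] at h
      exact h)
  have hcancel : (N + A) / M * ((b : ℝ) + 1 - a) = (RI.length : ℝ) * (N + A) := by
    have hI0 : (b : ℝ) + 1 - a ≠ 0 := by
      rw [← hIlen]
      positivity
    rw [hM, hIlen]
    field_simp
  rw [hcancel] at htotal
  have hlhs : RFDcodeLen cf d T s0 xs a b - distCodeLen p xs a b =
      (∑ k ∈ Finset.Icc a b, (Real.log (p (xs (k - 1))) -
        Real.log (RFDprob cf d T s0 xs (k - 1) (xs (k - 1))))) / Real.log 2 := by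
    unfold RFDcodeLen distCodeLen Real.logb
    rw [Finset.sum_sub_distrib, ← Finset.sum_div, ← Finset.sum_div]
    ring
  have hrhs : (RI.length : ℝ) * rBound N d A M
        + (1 - cf) * L * Real.logb 2 (Real.exp 1 * ((q.2 - q.1 + 1 : ℕ) : ℝ))
        + Real.logb 2 ((1 - cf) * L) =
      ((RI.length : ℝ) * ((N + A) * Real.log M + (Real.log (A + 1) + (A + 1)) + N * Real.log d)
        + (1 - cf) * L * (1 + Real.log ((q.2 : ℝ) + 1 - q.1))
        + Real.log ((1 - cf) * L)) / Real.log 2 := by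
    unfold rBound Real.logb
    rw [hmlen, Real.log_mul (by positivity) (by positivity),
      Real.log_mul (by positivity) (by positivity), Real.log_exp, Real.log_exp]
    ring
  rw [hlhs, hrhs]
  refine div_le_div_of_nonneg_right (htotal.trans ?_) hlog2.le
  have hlogA : 0 ≤ Real.log (A + 1) := Real.log_nonneg (by linarith)
  have hlogcL : 0 ≤ Real.log ((1 - cf) * L) := Real.log_nonneg hcL
  have hslack : 0 ≤ (RI.length : ℝ) * (Real.log (A + 1) + 1) := by positivity
  nlinarith
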